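/- arXiv:0706.1529 — 2 statements merged into one kernel-verified Lean document; each statement's English description precedes it below -/
import Mathlib

section
/- Let m ≥ 2 and let P = (X₁,…,X_m;≤) be an m-partite poset. Then dim(P) ≤ ⌊(m−1)(m+3)/4⌋ · B(P). -/
/-!
Call `[i, j]` with `i < j` an interval of levels. A linear extension of the bipartite subposet
`P_{i,j}` extends to a linear extension of `P` (`exists_extension_of_subset`). If several intervals
are pairwise disjoint, then linear extensions chosen for each of them can be used simultaneously
in a single linear extension of `P`: the intervals cut the levels into consecutive blocks, the
blocks are stacked in increasing order, and each block is ordered by the extension chosen for it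
(`isLinearOrder_stack`, `exists_blocks`). Hence, if the intervals are coloured so that two
distinct intervals of the same colour are disjoint, then `P` has a realizer consisting of `B(P)`
linear extensions for every colour.

It remains to colour with `⌊(m-1)(m+3)/4⌋` colours. Number the levels `0, …, m-1` and let
`p = ⌊m/2⌋`. The colours are the intervals `[a, b]` with `a ≤ p ≤ b`; there are
`(p+1)(m-p) - 1 = ⌊(m-1)(m+3)/4⌋` of them. An interval containing `p` is its own colour, and the
colour class of `[a, b]` consists of `[a, b]`, of `[b-p-1, a-1]` to its left and of `[b+1, a+p+1]`
to its right, whenever these are intervals of levels avoiding `p` (`colour`, `colour_disjoint`).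
-/

/-- A family of linear orders `L` realizes the relation `r` if each member is a linear
order and `r x y` holds iff `x` is below `y` in every member of the family. -/
def Realizes {α : Type*} {ι : Type*} (r : α → α → Prop) (L : ι → α → α → Prop) : Prop :=
  (∀ i, IsLinearOrder α (L i)) ∧ ∀ x y, r x y ↔ ∀ i, L i x y

/-- The order dimension of a relation `r`: the least `d` admitting a realizer of size `d`. -/
noncomputable def relDim {α : Type*} (r : α → α → Prop) : ℕ :=
  sInf {d : ℕ | ∃ L : Fin d → α → α → Prop, Realizes r L}

/-- The order dimension of the subposet induced on the subset `S`. -/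
noncomputable def subDim {α : Type*} (r : α → α → Prop) (S : Set α) : ℕ :=
  relDim (fun a b : S => r (a : α) (b : α))

/-- `(X₁,…,X_m; r)` is an `m`-partite poset: the `Xᵢ` are nonempty, pairwise disjoint,
cover everything, each `Xᵢ` is an antichain, and `x < y` forces `x ∈ Xᵢ`, `y ∈ X_j`
with `i < j`. -/
structure IsMPartite {α : Type*} (r : α → α → Prop) (m : ℕ) (X : Fin m → Set α) : Prop where
  nonempty : ∀ i, (X i).Nonempty
  disjoint : ∀ i j, i ≠ j → Disjoint (X i) (X j)
  cover : ∀ a, ∃ i, a ∈ X i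
  antichain : ∀ i, ∀ x ∈ X i, ∀ y ∈ X i, r x y → x = y
  strict : ∀ x y, r x y → x ≠ y → ∃ i j, i < j ∧ x ∈ X i ∧ y ∈ X j

/-- `B(P)`: the maximum of the dimensions of the bipartite subposets `P_{i,j}`, `i < j`. -/
noncomputable def BP {α : Type*} (r : α → α → Prop) {m : ℕ} (X : Fin m → Set α) : ℕ :=
  Finset.sup (Finset.univ.filter fun p : Fin m × Fin m => p.1 < p.2)
    (fun p => subDim r (X p.1 ∪ X p.2))

/-! ### Linear extensions -/

/-- Every partial order is contained in a linear order. -/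
lemma exists_linear_extension {α : Type*} (r : α → α → Prop) (hr : IsPartialOrder α r) :
    ∃ M : α → α → Prop, IsLinearOrder α M ∧ ∀ x y, r x y → M x y := by
  have := hr
  obtain ⟨s, hs, h⟩ := extend_partialOrder r
  exact ⟨s, hs, fun x y hxy => h x y hxy⟩

lemma exists_extension_of_subset {α : Type*} (r : α → α → Prop) (hr : IsPartialOrder α r)
    (S : Set α) (L : S → S → Prop) (hL : IsLinearOrder S L)
    (h : ∀ a b : S, r a b → L a b) :
    ∃ M : α → α → Prop, IsLinearOrder α M ∧ (∀ x y, r x y → M x y) ∧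
      ∀ a b : S, L a b → M a b := by
  have rr : ∀ x, r x x := fun x => hr.refl x
  have rt : ∀ {x y z}, r x y → r y z → r x z := fun {x y z} => hr.trans x y z
  have ra : ∀ {x y}, r x y → r y x → x = y := fun {x y} => hr.antisymm x y
  have lt : ∀ {x y z}, L x y → L y z → L x z := fun {x y z} => hL.trans x y z
  have la : ∀ {x y}, L x y → L y x → x = y := fun {x y} => hL.antisymm x y
  -- The transitive closure of `r ∪ L`: one step of `L` is enough, since `r` on `S` lies in `L`.
  let R : α → α → Prop := fun x y => r x y ∨ ∃ s t : S, r x s ∧ L s t ∧ r t y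
  have hR : IsPartialOrder α R :=
    { refl := fun x => Or.inl (rr x)
      trans := by
        rintro x y z (h1 | ⟨s, t, h1, h2, h3⟩) (h4 | ⟨s', t', h4, h5, h6⟩)
        · exact Or.inl (rt h1 h4)
        · exact Or.inr ⟨s', t', rt h1 h4, h5, h6⟩
        · exact Or.inr ⟨s, t, h1, h2, rt h3 h4⟩
        · exact Or.inr ⟨s, t', h1, lt h2 (lt (h _ _ (rt h3 h4)) h5), h6⟩
      antisymm := by
        rintro x y (h1 | ⟨s, t, h1, h2, h3⟩) (h4 | ⟨s', t', h4, h5, h6⟩)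
        · exact ra h1 h4
        · obtain rfl := la h5 (h _ _ (rt h6 (rt h1 h4)))
          exact ra h1 (rt h4 h6)
        · obtain rfl := la h2 (h _ _ (rt h3 (rt h4 h1)))
          exact ra (rt h1 h3) h4
        · have hts' := h _ _ (rt h3 h4)
          have hst := h _ _ (rt h6 h1)
          obtain rfl := la h2 (lt hts' (lt h5 hst))
          obtain rfl := la h5 (lt hst hts')
          obtain rfl := la hts' hst
          exact ra (rt h1 h3) (rt h4 h6) }
  obtain ⟨M, hM, hRM⟩ := exists_linear_extension R hR
  exact ⟨M, hM, fun x y hxy => hRM x y (Or.inl hxy),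
    fun a b hab => hRM a b (Or.inr ⟨a, b, rr _, hab, rr _⟩)⟩

lemma exists_extension_reversing {α : Type*} (r : α → α → Prop) (hr : IsPartialOrder α r)
    (x y : α) (hxy : ¬ r x y) :
    ∃ M : α → α → Prop, IsLinearOrder α M ∧ (∀ a b, r a b → M a b) ∧ ¬ M x y := by
  have rr : ∀ x, r x x := fun x => hr.refl x
  have rt : ∀ {x y z}, r x y → r y z → r x z := fun {x y z} => hr.trans x y z
  have ra : ∀ {x y}, r x y → r y x → x = y := fun {x y} => hr.antisymm x y
  -- The transitive closure of `r` together with the single new relation `y ≤ x`.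
  let R : α → α → Prop := fun a b => r a b ∨ (r a y ∧ r x b)
  have hR : IsPartialOrder α R :=
    { refl := fun x => Or.inl (rr x)
      trans := by
        rintro a b c (h1 | ⟨h1, h2⟩) (h4 | ⟨h4, h5⟩)
        · exact Or.inl (rt h1 h4)
        · exact Or.inr ⟨rt h1 h4, h5⟩
        · exact Or.inr ⟨h1, rt h2 h4⟩
        · exact Or.inr ⟨h1, h5⟩
      antisymm := by
        rintro a b (h1 | ⟨h1, h2⟩) (h4 | ⟨h4, h5⟩)
        · exact ra h1 h4
        · exact absurd (rt h5 (rt h1 h4)) hxy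
        · exact absurd (rt h2 (rt h4 h1)) hxy
        · exact absurd (rt h2 h4) hxy }
  obtain ⟨M, hM, hRM⟩ := exists_linear_extension R hR
  refine ⟨M, hM, fun a b hab => hRM a b (Or.inl hab), fun hM' => hxy ?_⟩
  have := hM.antisymm _ _ hM' (hRM y x (Or.inr ⟨rr _, rr _⟩))
  exact this ▸ rr x

/-! ### Realizers and dimension -/

lemma Realizes.comp_surjective {α ι κ : Type*} {r : α → α → Prop} {L : ι → α → α → Prop}
    (h : Realizes r L) (f : κ → ι) (hf : Function.Surjective f) :
    Realizes r (fun k => L (f k)) :=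
  ⟨fun k => h.1 (f k), fun x y => (h.2 x y).trans
    ⟨fun h k => h (f k), fun h i => by obtain ⟨k, rfl⟩ := hf i; exact h k⟩⟩

lemma relDim_le_card {α ι : Type*} [Fintype ι] {r : α → α → Prop} {L : ι → α → α → Prop}
    (h : Realizes r L) : relDim r ≤ Fintype.card ι :=
  Nat.sInf_le ⟨_, h.comp_surjective _ (Fintype.equivFin ι).symm.surjective⟩

/-- The infimum defining `relDim` is attained for a finite partial order, because the linear
extensions reversing the single non-relations form a realizer. -/
lemma exists_realizer_relDim {α : Type*} [Finite α] (r : α → α → Prop)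
    (hr : IsPartialOrder α r) : ∃ L : Fin (relDim r) → α → α → Prop, Realizes r L := by
  have key : ∀ p : α × α, ∃ M : α → α → Prop, IsLinearOrder α M ∧ (∀ a b, r a b → M a b) ∧
      (M p.1 p.2 → r p.1 p.2) := by
    intro p
    by_cases hp : r p.1 p.2
    · obtain ⟨M, hM, h⟩ := exists_linear_extension r hr
      exact ⟨M, hM, h, fun _ => hp⟩
    · obtain ⟨M, hM, h, hn⟩ := exists_extension_reversing r hr p.1 p.2 hp
      exact ⟨M, hM, h, fun h => absurd h hn⟩
  choose M hM hrM hMr using key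
  have hreal : Realizes r M :=
    ⟨hM, fun x y => ⟨fun h p => hrM p x y h, fun h => hMr (x, y) (h (x, y))⟩⟩
  have : Fintype (α × α) := Fintype.ofFinite _
  exact Nat.sInf_mem (s := {d : ℕ | ∃ L : Fin d → α → α → Prop, Realizes r L})
    ⟨_, _, hreal.comp_surjective _ (Fintype.equivFin (α × α)).symm.surjective⟩

/-- A realizer of minimal size can be padded by repetition. Two distinct elements are needed so
that the minimal realizer is not empty. -/
lemma exists_realizer_of_relDim_le {α : Type*} [Finite α] [Nontrivial α] (r : α → α → Prop)
    (hr : IsPartialOrder α r) {b : ℕ} (hb : relDim r ≤ b) :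
    ∃ L : Fin b → α → α → Prop, Realizes r L := by
  obtain ⟨L, hL⟩ := exists_realizer_relDim r hr
  have hpos : 0 < relDim r := by
    by_contra h0
    have hall : ∀ x y, r x y := fun x y => (hL.2 x y).2 fun i => absurd i.pos h0
    obtain ⟨x, y, hxy⟩ := exists_pair_ne α
    exact hxy (hr.antisymm _ _ (hall x y) (hall y x))
  refine ⟨_, hL.comp_surjective (fun k : Fin b => ⟨min k (relDim r - 1), by omega⟩) ?_⟩
  intro i
  exact ⟨⟨i, by omega⟩, by ext; simp; omega⟩

/-! ### Stacking linear orders on blocks of levels -/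

/-- Stacking the fibres of `f` in increasing order, with the fibre over `i` ordered by `M i`,
gives a linear order. -/
lemma isLinearOrder_stack {α ι : Type*} [LinearOrder ι] (f : α → ι) (M : ι → α → α → Prop)
    (hM : ∀ i, IsLinearOrder α (M i)) :
    IsLinearOrder α (fun x y => f x < f y ∨ f x = f y ∧ M (f x) x y) :=
  { refl := fun x => Or.inr ⟨rfl, (hM _).refl x⟩
    trans := by
      rintro x y z (h1 | ⟨h1, h2⟩) (h3 | ⟨h3, h4⟩)
      · exact Or.inl (h1.trans h3)
      · exact Or.inl (h3 ▸ h1)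
      · exact Or.inl (h1 ▸ h3)
      · exact Or.inr ⟨h1.trans h3, (hM _).trans _ _ _ h2 (h1 ▸ h4)⟩
    antisymm := by
      rintro x y (h1 | ⟨h1, h2⟩) (h3 | ⟨h3, h4⟩)
      · exact absurd h3 h1.asymm
      · exact absurd h1 (h3 ▸ lt_irrefl _)
      · exact absurd h3 (h1 ▸ lt_irrefl _)
      · exact (hM _).antisymm _ _ h2 (h1 ▸ h4)
    total := by
      intro x y
      rcases lt_trichotomy (f x) (f y) with h | h | h
      · exact Or.inl (Or.inl h)
      · rcases (hM (f x)).total x y with h' | h'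
        · exact Or.inl (Or.inr ⟨h, h'⟩)
        · exact Or.inr (Or.inr ⟨h.symm, h ▸ h'⟩)
      · exact Or.inr (Or.inl h) }

/-- A family `I` of pairwise disjoint intervals cuts a linear order into consecutive blocks: `f`
sends a point to the left end of the interval containing it (and to itself if there is none), and
`J` sends the left end of an interval to its right end. -/
lemma exists_blocks {ι : Type*} [LinearOrder ι] (I : ι → ι → Prop)
    (hI : ∀ i j i' j', I i j → I i' j' → (i = i' ∧ j = j') ∨ j < i' ∨ j' < i)
    (hlt : ∀ i j, I i j → i < j) :
    ∃ f J : ι → ι, Monotone f ∧ ∀ i j, I i j → J i = j ∧ ∀ l, i ≤ l → l ≤ j → f l = i := by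
  have hf : ∀ l, ∃ a, (∀ i j, I i j → i ≤ l → l ≤ j → a = i) ∧ a ≤ l ∧
      (a = l ∨ ∃ j, I a j ∧ l ≤ j) := by
    intro l
    by_cases h : ∃ i j, I i j ∧ i ≤ l ∧ l ≤ j
    · obtain ⟨i, j, h1, h2, h3⟩ := h
      refine ⟨i, fun i' j' h1' h2' h3' => ?_, h2, Or.inr ⟨j, h1, h3⟩⟩
      rcases hI _ _ _ _ h1 h1' with h | h | h
      · exact h.1
      · exact absurd (h3.trans_lt h) h2'.not_gt
      · exact absurd (h3'.trans_lt h) h2.not_gt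
    · exact ⟨l, fun i j h1 h2 h3 => absurd ⟨i, j, h1, h2, h3⟩ h, le_rfl, Or.inl rfl⟩
  have hJ : ∀ i, ∃ j, ∀ j', I i j' → j = j' := by
    intro i
    by_cases h : ∃ j, I i j
    · obtain ⟨j, hj⟩ := h
      refine ⟨j, fun j' hj' => ?_⟩
      rcases hI _ _ _ _ hj hj' with h | h | h
      · exact h.2
      · exact absurd h (hlt _ _ hj).asymm
      · exact absurd h (hlt _ _ hj').asymm
    · exact ⟨i, fun j' hj' => absurd ⟨j', hj'⟩ h⟩
  choose f hf hfle hfl using hf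
  choose J hJ using hJ
  refine ⟨f, J, fun l l' hll' => ?_, fun i j h => ⟨hJ i j h, fun l => hf l i j h⟩⟩
  rcases hfl l' with h | ⟨j, h, hj⟩
  · rw [h]; exact (hfle l).trans hll'
  · rcases le_or_gt (f l') l with hle | hgt
    · exact (hf l _ _ h hle (hll'.trans hj)).le
    · exact (hfle l).trans hgt.le

/-! ### Colouring the intervals -/

/-- The colour of the interval `[i, j]`, where `p` is the middle level: an interval containing `p`
is its own colour, and any other interval gets the colour of a disjoint one containing `p`. -/
def colour (p i j : ℕ) : ℕ × ℕ :=
  if j < p then (j + 1, p + 1 + i) else if p < i then (j - p - 1, i - 1) else (i, j)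

/-- The set of colours: intervals `[a, b]` with `a ≤ p ≤ b < m`, where `p = ⌊m/2⌋`. -/
def colours (m : ℕ) : Finset (ℕ × ℕ) :=
  (Finset.range (m / 2 + 1) ×ˢ Finset.Ico (m / 2) m).erase (m / 2, m / 2)

lemma colour_mem {m i j : ℕ} (hij : i < j) (hj : j < m) : colour (m / 2) i j ∈ colours m := by
  unfold colour colours
  split_ifs <;>
    simp only [Finset.mem_erase, Finset.mem_product, Finset.mem_range, Finset.mem_Ico, ne_eq,
      Prod.mk.injEq] <;> omega

lemma colour_disjoint {p i j i' j' : ℕ} (hij : i < j) (hij' : i' < j')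
    (h : colour p i j = colour p i' j') : (i = i' ∧ j = j') ∨ j < i' ∨ j' < i := by
  unfold colour at h
  split_ifs at h <;> simp only [Prod.mk.injEq] at h <;> omega

lemma card_colours {m : ℕ} (hm : 2 ≤ m) : (colours m).card = (m - 1) * (m + 3) / 4 := by
  unfold colours
  rw [Finset.card_erase_of_mem (by simp; omega), Finset.card_product, Finset.card_range,
    Nat.card_Ico]
  obtain ⟨q, hq | hq⟩ : ∃ q, m = 2 * q + 2 ∨ m = 2 * q + 3 := ⟨m / 2 - 1, by omega⟩
  · have h1 : m / 2 = q + 1 := by omega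
    have h2 : m - (q + 1) = q + 1 := by omega
    have h3 : m - 1 = 2 * q + 1 := by omega
    have h4 : m + 3 = 2 * q + 5 := by omega
    rw [h1, h2, h3, h4]
    have e1 : (q + 1 + 1) * (q + 1) = q * q + 3 * q + 2 := by ring
    have e2 : (2 * q + 1) * (2 * q + 5) = 4 * (q * q) + 12 * q + 5 := by ring
    omega
  · have h1 : m / 2 = q + 1 := by omega
    have h2 : m - (q + 1) = q + 2 := by omega
    have h3 : m - 1 = 2 * q + 2 := by omega
    have h4 : m + 3 = 2 * q + 6 := by omega
    rw [h1, h2, h3, h4]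
    have e1 : (q + 1 + 1) * (q + 2) = q * q + 4 * q + 4 := by ring
    have e2 : (2 * q + 2) * (2 * q + 6) = 4 * (q * q) + 16 * q + 12 := by ring
    omega

/-! ### The dimension bound -/

/-- `B(P)` linear extensions of `P` that realize `P_{i,j}` when `i < j`. For other `i`, `j` they
are merely linear extensions, so that no side condition is needed to speak about them. -/
lemma exists_extensions_pair {α : Type*} [Fintype α] (r : α → α → Prop)
    (hr : IsPartialOrder α r) {m : ℕ} (X : Fin m → Set α) (hX : IsMPartite r m X) (i j : Fin m) :
    ∃ E : Fin (BP r X) → α → α → Prop, (∀ k, IsLinearOrder α (E k)) ∧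
      (∀ k x y, r x y → E k x y) ∧
      (i < j → ∀ x y, x ∈ X i ∪ X j → y ∈ X i ∪ X j → (∀ k, E k x y) → r x y) := by
  by_cases hij : i < j
  · have hle : subDim r (X i ∪ X j) ≤ BP r X :=
      Finset.le_sup (f := fun p : Fin m × Fin m => subDim r (X p.1 ∪ X p.2))
        (b := (i, j)) (by simpa using hij)
    obtain ⟨x, hx⟩ := hX.nonempty i
    obtain ⟨y, hy⟩ := hX.nonempty j
    have hne : x ≠ y := (hX.disjoint i j hij.ne).ne_of_mem hx hy
    have : Nontrivial ↥(X i ∪ X j) :=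
      ⟨⟨x, Or.inl hx⟩, ⟨y, Or.inr hy⟩, fun h => hne (congrArg Subtype.val h)⟩
    have hs : IsPartialOrder ↥(X i ∪ X j) (fun a b => r (a : α) (b : α)) :=
      { refl := fun a => hr.refl _
        trans := fun a b c => hr.trans _ _ _
        antisymm := fun a b h h' => Subtype.ext (hr.antisymm _ _ h h') }
    obtain ⟨L, hL, hLr⟩ := exists_realizer_of_relDim_le _ hs hle
    choose E hE hrE hLE using fun k => exists_extension_of_subset r hr _ (L k) (hL k)
      (fun a b h => (hLr a b).1 h k)
    refine ⟨E, hE, hrE, fun _ x y hx hy h => (hLr ⟨x, hx⟩ ⟨y, hy⟩).2 fun k => ?_⟩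
    rcases (hL k).total ⟨x, hx⟩ ⟨y, hy⟩ with h' | h'
    · exact h'
    · obtain rfl : x = y := (hE k).antisymm _ _ (h k) (hLE k _ _ h')
      exact h'
  · obtain ⟨M, hM, h⟩ := exists_linear_extension r hr
    exact ⟨fun _ => M, fun _ => hM, fun _ => h, fun h => absurd h hij⟩

/-- For an `m`-partite poset `P`, `dim(P) ≤ ⌊(m-1)(m+3)/4⌋ · B(P)`. -/
theorem dim_le_floor_mul_BP {α : Type*} [Fintype α] (r : α → α → Prop)
    (hr : IsPartialOrder α r) {m : ℕ} (hm : 2 ≤ m) (X : Fin m → Set α)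
    (hX : IsMPartite r m X) :
    relDim r ≤ ((m - 1) * (m + 3) / 4) * BP r X := by
  choose E hE hrE hEr using exists_extensions_pair r hr X hX
  choose lev hlev using hX.cover
  have hlev_eq : ∀ x i, x ∈ X i → lev x = i := by
    intro x i hx
    by_contra h
    exact (hX.disjoint _ _ h).ne_of_mem (hlev x) hx rfl
  have hlev_mono : ∀ x y, r x y → lev x ≤ lev y := by
    intro x y h
    by_cases hxy : x = y
    · rw [hxy]
    · obtain ⟨i, j, hij, hx, hy⟩ := hX.strict x y h hxy
      rw [hlev_eq x i hx, hlev_eq y j hy]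
      exact hij.le
  choose f J hf hfJ using fun c : colours m => exists_blocks
    (fun i j : Fin m => i < j ∧ colour (m / 2) i j = c)
    (fun i j i' j' h h' => by
      have := colour_disjoint (p := m / 2) h.1 h'.1 (h.2.trans h'.2.symm)
      simpa only [Fin.ext_iff, Fin.lt_def] using this)
    (fun i j h => h.1)
  have hreal : Realizes r (fun (q : colours m × Fin (BP r X)) x y =>
      f q.1 (lev x) < f q.1 (lev y) ∨ f q.1 (lev x) = f q.1 (lev y) ∧
        E (f q.1 (lev x)) (J q.1 (f q.1 (lev x))) q.2 x y) := by
    refine ⟨fun q => isLinearOrder_stack (fun x => f q.1 (lev x))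
      (fun i => E i (J q.1 i) q.2) (fun i => hE _ _ _), fun x y => ⟨fun h q => ?_, fun h => ?_⟩⟩
    · rcases (hf q.1 (hlev_mono x y h)).lt_or_eq with h' | h'
      · exact Or.inl h'
      · exact Or.inr ⟨h', hrE _ _ _ _ _ h⟩
    · have : Nontrivial (Fin m) := Fin.nontrivial_iff_two_le.2 hm
      -- When `x` and `y` lie on the same level, any second level completes it to an interval.
      obtain ⟨i, j, hij, hx, hy⟩ : ∃ i j : Fin m, i < j ∧ (lev x = i ∨ lev x = j) ∧
          (lev y = i ∨ lev y = j) := by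
        rcases lt_trichotomy (lev x) (lev y) with h | h | h
        · exact ⟨_, _, h, Or.inl rfl, Or.inr rfl⟩
        · obtain ⟨l, hl⟩ := exists_ne (lev x)
          rcases hl.lt_or_gt with h' | h'
          · exact ⟨_, _, h', Or.inr rfl, Or.inr h.symm⟩
          · exact ⟨_, _, h', Or.inl rfl, Or.inl h.symm⟩
        · exact ⟨_, _, h, Or.inr rfl, Or.inl rfl⟩
      let c : colours m := ⟨colour (m / 2) i j, colour_mem hij j.isLt⟩
      obtain ⟨hJc, hfc⟩ := hfJ c i j ⟨hij, rfl⟩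
      have hmem : ∀ z, (lev z = i ∨ lev z = j) → z ∈ X i ∪ X j ∧ f c (lev z) = i := by
        rintro z (hz | hz)
        · exact ⟨Or.inl (hz ▸ hlev z), hfc _ hz.ge (hz.le.trans hij.le)⟩
        · exact ⟨Or.inr (hz ▸ hlev z), hfc _ (hij.le.trans hz.ge) hz.le⟩
      obtain ⟨hx1, hx2⟩ := hmem x hx
      obtain ⟨hy1, hy2⟩ := hmem y hy
      refine hEr i j hij x y hx1 hy1 fun k => ?_
      have hk := h (c, k)
      simpa only [hx2, hy2, hJc, lt_irrefl, false_or, true_and] using hk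
  have hcard := relDim_le_card hreal
  rwa [Fintype.card_prod, Fintype.card_coe, Fintype.card_fin, card_colours hm] at hcard
end

section
/- For every n ≥ 2, the poset P_n on A ∪ C ∪ B generated by the relations a_i < c_{ij} < b_j (for i ≠ j) has order dimension at least n. -/
/-- Index set of the middle layer `C = {c_{ij} : i ≠ j}`. -/
abbrev CIdx (n : ℕ) := {p : Fin n × Fin n // p.1 ≠ p.2}

/-- The ground set `A ∪ C ∪ B` of the poset `P_n`. -/
abbrev PnElt (n : ℕ) := Fin n ⊕ (CIdx n ⊕ Fin n)

/-- The order of `P_n`, generated by `a_i < c_{ij} < b_j` for `i ≠ j`: the strict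
relations are exactly `a_i < c_{ij}`, `c_{ij} < b_j`, and `a_i < b_j` for `i ≠ j`. -/
def Pnle (n : ℕ) : PnElt n → PnElt n → Prop
  | Sum.inl i, Sum.inl i' => i = i'
  | Sum.inl i, Sum.inr (Sum.inl c) => c.1.1 = i
  | Sum.inl i, Sum.inr (Sum.inr j) => i ≠ j
  | Sum.inr (Sum.inl c), Sum.inr (Sum.inl c') => c = c'
  | Sum.inr (Sum.inl c), Sum.inr (Sum.inr j) => c.1.2 = j
  | Sum.inr (Sum.inr j), Sum.inr (Sum.inr j') => j = j'
  | _, _ => False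

/-- A relation `x ≤ y` that fails in a partial order fails in some linear extension of it. -/
theorem exists_linear_extension_not {α : Type*} (r : α → α → Prop) [IsPartialOrder α r]
    {x y : α} (hxy : ¬ r x y) :
    ∃ s : α → α → Prop, IsLinearOrder α s ∧ r ≤ s ∧ ¬ s x y := by
  -- The partial order generated by `r` and the relation `y ≤ x`.
  let t : α → α → Prop := fun u v => r u v ∨ (r u y ∧ r x v)
  have tr : ∀ {a b c : α}, r a b → r b c → r a c := fun h h' => _root_.trans h h'
  have ht : IsPartialOrder α t :=
    { refl := fun a => Or.inl (refl_of r a)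
      trans := by
        rintro a b c (h | ⟨h1, h2⟩) (h' | ⟨h1', h2'⟩)
        · exact Or.inl (tr h h')
        · exact Or.inr ⟨tr h h1', h2'⟩
        · exact Or.inr ⟨h1, tr h2 h'⟩
        · exact Or.inr ⟨h1, h2'⟩
      antisymm := by
        rintro a b (h | ⟨h1, h2⟩) (h' | ⟨h1', h2'⟩)
        · exact antisymm_of r h h'
        · exact (hxy (tr h2' (tr h h1'))).elim
        · exact (hxy (tr h2 (tr h' h1))).elim
        · exact (hxy (tr h2 h1')).elim }
  obtain ⟨s, hs, hts⟩ := extend_partialOrder t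
  refine ⟨s, hs, fun u v h => hts u v (Or.inl h), fun h => hxy ?_⟩
  have hyx : s y x := hts y x (Or.inr ⟨refl_of r y, refl_of r x⟩)
  rw [antisymm_of s h hyx]
  exact refl_of r y

theorem exists_realizes {α : Type*} [Finite α] (r : α → α → Prop) [IsPartialOrder α r] :
    {d : ℕ | ∃ L : Fin d → α → α → Prop, Realizes r L}.Nonempty := by
  obtain ⟨d, ⟨e⟩⟩ :=
    Finite.exists_equiv_fin {s : α → α → Prop // IsLinearOrder α s ∧ r ≤ s}
  refine ⟨d, fun i => (e.symm i).1, fun i => (e.symm i).2.1, fun x y => ?_⟩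
  refine ⟨fun h i => (e.symm i).2.2 x y h, fun h => ?_⟩
  by_contra hxy
  obtain ⟨s, hs, hrs, hn⟩ := exists_linear_extension_not r hxy
  exact hn (by simpa using h (e ⟨s, hs, hrs⟩))

instance Pnle.isPartialOrder (n : ℕ) : IsPartialOrder (PnElt n) (Pnle n) where
  refl := by rintro (i | c | j) <;> simp [Pnle]
  trans := by
    rintro (i | c | j) (i' | ⟨⟨p', q'⟩, h'⟩ | j') (i'' | c'' | j'') <;> simp only [Pnle] <;> grind
  antisymm := by
    rintro (i | c | j) (i' | c' | j') <;> simp only [Pnle] <;> grind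

/-- The injection sends `i` to a member of the realizer in which `a_i ≤ b_i` fails. -/
theorem exists_injective_of_realizes {n : ℕ} {ι : Type*} {L : ι → PnElt n → PnElt n → Prop}
    (hL : Realizes (Pnle n) L) : ∃ f : Fin n → ι, Function.Injective f := by
  obtain ⟨hlin, hr⟩ := hL
  have hrev : ∀ i : Fin n, ∃ k, ¬ L k (Sum.inl i) (Sum.inr (Sum.inr i)) := by
    intro i
    by_contra! h
    exact (hr (Sum.inl i) (Sum.inr (Sum.inr i))).2 h rfl
  choose f hf using hrev
  refine ⟨f, fun i j hij => ?_⟩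
  by_contra hne
  have := hlin (f i)
  have h1 : L (f i) (Sum.inl i) (Sum.inr (Sum.inr j)) :=
    (hr (Sum.inl i) (Sum.inr (Sum.inr j))).1 hne _
  have h2 : L (f i) (Sum.inr (Sum.inr j)) (Sum.inl j) :=
    (total_of (L (f i)) _ _).resolve_right (hij ▸ hf j)
  have h3 : L (f i) (Sum.inl j) (Sum.inr (Sum.inr i)) :=
    (hr (Sum.inl j) (Sum.inr (Sum.inr i))).1 (Ne.symm hne) _
  exact hf i (trans_of (L (f i)) h1 (trans_of (L (f i)) h2 h3))

/-- For every `n ≥ 2`, the poset `P_n` has order dimension at least `n`. -/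
theorem dim_Pn_ge {n : ℕ} (hn : 2 ≤ n) : n ≤ relDim (Pnle n) := by
  refine le_csInf (exists_realizes (Pnle n)) ?_
  rintro d ⟨L, hL⟩
  simpa using Fintype.card_le_of_injective _ (exists_injective_of_realizes hL).choose_spec
end
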